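/- If an automorphism σ of a finite tree T permutes the vertices and edges, then σ fixes a vertex or fixes an edge (possibly swapping its endpoints). -/

import Mathlib

/-- An automorphism σ of a finite tree fixes a vertex or fixes an edge
(possibly swapping its endpoints). -/
theorem stmt15 {V : Type*} [Fintype V] [Nonempty V] (T : SimpleGraph V)
    (hT : T.IsTree) (σ : T ≃g T) :
    (∃ x : V, σ x = x) ∨ ∃ a b : V, T.Adj a b ∧ σ a = b ∧ σ b = a := by
  classical
  by_cases hfix : ∃ x : V, σ x = x
  · exact Or.inl hfix
  right
  have key : ∀ x y : V, x ≠ y → ∃ w, T.Adj x w ∧ ∃ q : T.Walk w y, x ∉ q.support := by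
    intro x y hxy
    obtain ⟨p, hp, -⟩ := hT.existsUnique_path x y
    cases p with
    | nil => exact absurd rfl hxy
    | cons h q =>
      rw [SimpleGraph.Walk.cons_isPath_iff] at hp
      exact ⟨_, h, q, hp.2⟩
  choose w hw q hq using fun x : V => key x (σ x) (fun h => hfix ⟨x, h.symm⟩)
  have hcard := hT.card_edgeFinset
  obtain ⟨u, -, v, -, huv, he⟩ := Finset.exists_ne_map_eq_of_card_lt_of_maps_to
    (s := Finset.univ) (t := T.edgeFinset) (f := fun x => s(x, w x))
    (by rw [Finset.card_univ]; omega) (by intro x _; simpa using hw x)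
  have h1 : w u = v ∧ w v = u := by
    simp only [Sym2.eq_iff] at he
    rcases he with ⟨h, _⟩ | ⟨h, h'⟩
    · exact absurd h huv
    · exact ⟨h', h.symm⟩
  obtain ⟨hu, hv⟩ := h1
  have huvA : T.Adj u v := hu ▸ hw u
  have r1 : (T.deleteEdges {s(u, v)}).Reachable v (σ u) := by
    rw [← hu]
    exact ⟨(q u).toDeleteEdge _ fun h => hq u ((q u).fst_mem_support_of_mem_edges h)⟩
  have r2 : (T.deleteEdges {s(u, v)}).Reachable u (σ v) := by
    rw [← hv, Sym2.eq_swap]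
    have := hq v
    refine ⟨(q v).toDeleteEdge _ fun h => hq v ?_⟩
    exact (q v).fst_mem_support_of_mem_edges (by simpa [hv] using h)
  have hb := SimpleGraph.isAcyclic_iff_forall_adj_isBridge.1 hT.isAcyclic huvA
  rw [SimpleGraph.isBridge_iff] at hb
  have hA : T.Adj (σ u) (σ v) := σ.map_adj_iff.2 huvA
  have hE : s(σ u, σ v) = s(u, v) := by
    by_contra hne
    have : (T.deleteEdges {s(u, v)}).Adj (σ v) (σ u) := by
      rw [SimpleGraph.deleteEdges_adj]
      exact ⟨hA.symm, fun h => hne (Sym2.eq_swap.trans h)⟩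
    have hr := (r2.trans this.reachable).trans r1.symm
    first
    | exact hb hr
    | exact hb.2 hr
  rw [Sym2.eq_iff] at hE
  rcases hE with ⟨h, _⟩ | ⟨h, h'⟩
  · exact absurd ⟨u, h⟩ hfix
  · exact ⟨u, v, huvA, h, h'⟩
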